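/- arXiv:1312.3829 — 6 statements merged into one kernel-verified Lean document; each statement's English description precedes it below -/
import Mathlib

section
/- Monotonicity of interleaving: let Γ₁, Γ₂, K₁, K₂ be translations on a preordered set P with Γ₁ ≤ Γ₂ and K₁ ≤ K₂, and let F, G : P ⥤ D be functors into a category D. If F and G are (Γ₁,K₁)-interleaved, then F and G are (Γ₂,K₂)-interleaved. -/
/-!
The inequalities `Γ₁ ≤ Γ₂` and `K₁ ≤ K₂` are natural transformations between the corresponding
endofunctors of `P`. Whiskering them with `G` and `F` and postcomposing turns a
`(Γ₁,K₁)`-interleaving into candidate maps for a `(Γ₂,K₂)`-interleaving. Naturality of `ψ` along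
`Γ₁ x ≤ Γ₂ x` (resp. of `φ` along `K₁ x ≤ K₂ x`) moves the structure map past the second
interleaving map; the old triangle identity then applies, and what is left is an equation between
images of morphisms in a thin category.
-/

open CategoryTheory
open scoped NNReal ENNReal

universe v₁ u₁ v₂ u₂

/-- A translation on a preordered set `P`. -/
structure Translation (P : Type*) [Preorder P] where
  toFun : P → P
  mono : Monotone toFun
  le_apply : ∀ x, x ≤ toFun x

namespace Translation

variable {P : Type*} [Preorder P]

/-- The identity translation. -/
def id (P : Type*) [Preorder P] : Translation P :=
  ⟨fun x => x, monotone_id, fun _ => le_refl _⟩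

/-- Composition of translations. -/
def comp (Γ₁ Γ₂ : Translation P) : Translation P :=
  ⟨Γ₁.toFun ∘ Γ₂.toFun, Γ₁.mono.comp Γ₂.mono,
    fun x => (Γ₂.le_apply x).trans (Γ₁.le_apply _)⟩

instance : Preorder (Translation P) where
  le Γ K := ∀ x, Γ.toFun x ≤ K.toFun x
  le_refl Γ x := le_refl _
  le_trans Γ K L h₁ h₂ x := (h₁ x).trans (h₂ x)

/-- A translation, regarded as an endofunctor of `P` viewed as a thin category. -/
def functor (Γ : Translation P) : P ⥤ P := Γ.mono.functor

end Translation

variable {P : Type*} [Preorder P] {D : Type u₁} [Category.{v₁} D]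

/-- A `(Γ,K)`-interleaving between functors `F G : P ⥤ D`. -/
structure Interleaving (Γ K : Translation P) (F G : P ⥤ D) where
  φ : F ⟶ Γ.functor ⋙ G
  ψ : G ⟶ K.functor ⋙ F
  tri₁ : ∀ x : P, φ.app x ≫ ψ.app (Γ.toFun x) =
    F.map (homOfLE ((Γ.le_apply x).trans (K.le_apply _)))
  tri₂ : ∀ x : P, ψ.app x ≫ φ.app (K.toFun x) =
    G.map (homOfLE ((K.le_apply x).trans (Γ.le_apply _)))

/-- `F` and `G` are `(Γ,K)`-interleaved if a `(Γ,K)`-interleaving exists. -/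
def Interleaved (Γ K : Translation P) (F G : P ⥤ D) : Prop :=
  Nonempty (Interleaving Γ K F G)

/-- The natural transformation between endofunctors of `P` given by `Γ₁ ≤ Γ₂`. -/
def Translation.homOfLE {P : Type*} [Preorder P] {Γ₁ Γ₂ : Translation P} (h : Γ₁ ≤ Γ₂) :
    Γ₁.functor ⟶ Γ₂.functor where
  app x := CategoryTheory.homOfLE (h x)
  naturality _ _ _ := Subsingleton.elim _ _

theorem comp_comp_of_square {C : Type u₁} [Category.{v₁} C] {X Y₁ Y₂ Z₁ Z₂ Z₃ : C}
    {p : X ⟶ Y₁} {g : Y₁ ⟶ Y₂} {q₁ : Y₁ ⟶ Z₁} {q₂ : Y₂ ⟶ Z₂} {f : Z₁ ⟶ Z₂} {t : X ⟶ Z₁}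
    (sq : g ≫ q₂ = q₁ ≫ f) (tri : p ≫ q₁ = t) (k : Z₂ ⟶ Z₃) :
    (p ≫ g) ≫ (q₂ ≫ k) = t ≫ f ≫ k := by
  rw [← tri, Category.assoc, ← Category.assoc g, sq, Category.assoc, Category.assoc]

/-- Either triangle identity for the enlarged translations. The second one is the first with the
roles of `F`, `G` and of the two translations exchanged. -/
theorem triangle_of_le {P : Type*} [Preorder P] {D : Type u₁} [Category.{v₁} D]
    {Γ₁ Γ₂ K₁ K₂ : Translation P} (hΓ : Γ₁ ≤ Γ₂) (hK : K₁ ≤ K₂) {F G : P ⥤ D}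
    (φ : F ⟶ Γ₁.functor ⋙ G) (ψ : G ⟶ K₁.functor ⋙ F)
    (tri : ∀ x : P, φ.app x ≫ ψ.app (Γ₁.toFun x) =
      F.map (homOfLE ((Γ₁.le_apply x).trans (K₁.le_apply _)))) (x : P) :
    (φ ≫ Functor.whiskerRight (Translation.homOfLE hΓ) G).app x ≫
        (ψ ≫ Functor.whiskerRight (Translation.homOfLE hK) F).app (Γ₂.toFun x) =
      F.map (homOfLE ((Γ₂.le_apply x).trans (K₂.le_apply _))) := by
  -- Definitional unfolding identifies `Γ.functor.obj y` with `Γ.toFun y`.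
  refine (comp_comp_of_square (ψ.naturality (homOfLE (hΓ x))) (tri x)
    (F.map (homOfLE (hK (Γ₂.toFun x))))).trans ?_
  exact ((F.map_comp _ _).trans (congrArg (_ ≫ ·) (F.map_comp _ _))).symm

/-- monotonicity. If `Γ₁ ≤ Γ₂`, `K₁ ≤ K₂` and `F, G` are
`(Γ₁,K₁)`-interleaved, then `F, G` are `(Γ₂,K₂)`-interleaved. -/
theorem interleaved_mono {P : Type*} [Preorder P] {D : Type u₁} [Category.{v₁} D]
    (Γ₁ Γ₂ K₁ K₂ : Translation P) (hΓ : Γ₁ ≤ Γ₂) (hK : K₁ ≤ K₂) (F G : P ⥤ D)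
    (h : Interleaved Γ₁ K₁ F G) : Interleaved Γ₂ K₂ F G := by
  obtain ⟨I⟩ := h
  exact ⟨{
    φ := I.φ ≫ Functor.whiskerRight (Translation.homOfLE hΓ) G
    ψ := I.ψ ≫ Functor.whiskerRight (Translation.homOfLE hK) F
    tri₁ := triangle_of_le hΓ hK I.φ I.ψ I.tri₁
    tri₂ := triangle_of_le hK hΓ I.ψ I.φ I.tri₂ }⟩
end

section
/- Triangle inequality for interleavings: let Γ₁, Γ₂, K₁, K₂ be translations on a preordered set P and let F, G, H : P ⥤ D be functors into a category D. If F and G are (Γ₁,K₁)-interleaved and G and H are (Γ₂,K₂)-interleaved, then F and H are (Γ₂∘Γ₁, K₁∘K₂)-interleaved, where Γ₂∘Γ₁ is the translation x ↦ Γ₂(Γ₁(x)) and K₁∘K₂ is the translation x ↦ K₁(K₂(x)). -/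
/-!
Interleavings compose: from `F` to `H` go along `F x → G (Γ₁ x) → H (Γ₂ (Γ₁ x))`, and back along
`H x → G (K₂ x) → F (K₁ (K₂ x))`. In the round trip from `F`, the inner round trip through `H` is a
structure map of `G` by the second interleaving; naturality of `ψ` for the first interleaving moves
it past `ψ` as a structure map of `F`, and the first interleaving turns the remaining round trip
through `G` into a structure map of `F` too (`Interleaving.comp_tri`). The round trip from `H` is the
same statement with the two interleavings reversed (`Interleaving.symm`).
-/

open CategoryTheory
open scoped NNReal ENNReal

universe v₁ u₁ v₂ u₂

variable {P : Type*} [Preorder P] {D : Type u₁} [Category.{v₁} D]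

namespace Interleaving

/-- Interchanging the two functors of an interleaving. -/
def symm {P : Type*} [Preorder P] {D : Type u₁} [Category.{v₁} D]
    {Γ K : Translation P} {F G : P ⥤ D} (I : Interleaving Γ K F G) : Interleaving K Γ G F where
  φ := I.ψ
  ψ := I.φ
  tri₁ := I.tri₂
  tri₂ := I.tri₁

/-- The round trip `F → G → H → G → F` is a structure map of `F`. -/
theorem comp_tri {P : Type*} [Preorder P] {D : Type u₁} [Category.{v₁} D]
    {Γ₁ Γ₂ K₁ K₂ : Translation P} {F G H : P ⥤ D}
    (I : Interleaving Γ₁ K₁ F G) (J : Interleaving Γ₂ K₂ G H) (x : P)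
    (h : x ≤ K₁.toFun (K₂.toFun (Γ₂.toFun (Γ₁.toFun x)))) :
    (I.φ.app x ≫ J.φ.app (Γ₁.toFun x)) ≫
      (J.ψ.app (Γ₂.toFun (Γ₁.toFun x)) ≫ I.ψ.app (K₂.toFun (Γ₂.toFun (Γ₁.toFun x)))) =
    F.map (homOfLE h) := by
  have hG : Γ₁.toFun x ≤ K₂.toFun (Γ₂.toFun (Γ₁.toFun x)) :=
    (Γ₂.le_apply _).trans (K₂.le_apply _)
  have e₁ := J.tri₁ (Γ₁.toFun x)
  have e₂ : G.map (homOfLE hG) ≫ I.ψ.app (K₂.toFun (Γ₂.toFun (Γ₁.toFun x))) =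
      I.ψ.app (Γ₁.toFun x) ≫ F.map (homOfLE (K₁.mono hG)) := I.ψ.naturality (homOfLE hG)
  -- The objects `(Γ ⋙ G).obj x` and `G.obj (Γ x)` agree only definitionally, so the equations are
  -- chained as terms instead of rewritten.
  refine (Category.assoc _ _ _).trans ?_
  refine (congrArg (I.φ.app x ≫ ·) (Category.assoc _ _ _).symm).trans ?_
  refine (congrArg (fun f => I.φ.app x ≫ f ≫ I.ψ.app _) e₁).trans ?_
  refine (congrArg (I.φ.app x ≫ ·) e₂).trans ?_
  refine (Category.assoc _ _ _).symm.trans ?_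
  refine (congrArg (· ≫ F.map (homOfLE (K₁.mono hG))) (I.tri₁ x)).trans ?_
  exact (F.map_comp _ _).symm

end Interleaving

/-- triangle inequality for interleavings. -/
theorem interleaved_trans {P : Type*} [Preorder P] {D : Type u₁} [Category.{v₁} D]
    (Γ₁ Γ₂ K₁ K₂ : Translation P) (F G H : P ⥤ D)
    (h₁ : Interleaved Γ₁ K₁ F G) (h₂ : Interleaved Γ₂ K₂ G H) :
    Interleaved (Γ₂.comp Γ₁) (K₁.comp K₂) F H := by
  obtain ⟨I⟩ := h₁
  obtain ⟨J⟩ := h₂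
  exact ⟨{
    φ := I.φ ≫ Functor.whiskerLeft Γ₁.functor J.φ
    ψ := J.ψ ≫ Functor.whiskerLeft K₂.functor I.ψ
    tri₁ := fun x => I.comp_tri J x _
    tri₂ := fun x => J.symm.comp_tri I.symm x _ }⟩
end

section
/- Let ω be a sublinear projection on a preordered set P and define its monotone hull by ω̄(Γ) = inf { ω(Γ') : Γ' a translation with Γ ≤ Γ' }. Then ω̄ is a sublinear projection which is monotone (Γ ≤ K implies ω̄(Γ) ≤ ω̄(K)), and for any category D and any functors F, G : P ⥤ D the interleaving distances agree: d^ω(F,G) = d^ω̄(F,G). -/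
/-!
The projection `ω̄ = monotoneHull ω` lies below `ω` because `Γ ≤ Γ`, which gives `ω̄ id = 0` and
`d^ω̄ ≤ d^ω`. Monotonicity is immediate, as a larger translation has fewer translations above it;
sublinearity holds because `Γ₁ ≤ Γ₁'` and `Γ₂ ≤ Γ₂'` imply `Γ₁ ∘ Γ₂ ≤ Γ₁' ∘ Γ₂'`.

For `d^ω ≤ d^ω̄`, the key fact is that a `(Γ, K)`-interleaving extends to a
`(Γ', K')`-interleaving whenever `Γ ≤ Γ'` and `K ≤ K'` (`Interleaved.of_le`): postcompose its
components with structure maps of the modules. If `ω̄ Γ, ω̄ K ≤ ε`, then for each `δ > 0` there are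
`Γ' ≥ Γ` and `K' ≥ K` with `ω Γ', ω K' < ε + δ`, so an `ε`-interleaving for `ω̄` gives an
`(ε + δ)`-interleaving for `ω`.
-/

open CategoryTheory
open scoped NNReal ENNReal

universe v₁ u₁ v₂ u₂

variable {P : Type*} [Preorder P] {D : Type u₁} [Category.{v₁} D]

/-- The interleaving distance associated to a sublinear projection `ω`. -/
noncomputable def dSub (ω : Translation P → ℝ≥0∞) (F G : P ⥤ D) : ℝ≥0∞ :=
  sInf ((fun ε : ℝ≥0 => (ε : ℝ≥0∞)) ''
    {ε : ℝ≥0 | ∃ Γ K : Translation P, ω Γ ≤ (ε : ℝ≥0∞) ∧ ω K ≤ (ε : ℝ≥0∞) ∧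
      Interleaved Γ K F G})



/-- The monotone hull of a function `ω` on translations. -/
noncomputable def monotoneHull {P : Type*} [Preorder P] (ω : Translation P → ℝ≥0∞)
    (Γ : Translation P) : ℝ≥0∞ :=
  sInf (ω '' {Γ' : Translation P | Γ ≤ Γ'})

theorem monotoneHull_le {P : Type*} [Preorder P] (ω : Translation P → ℝ≥0∞)
    {Γ Γ' : Translation P} (h : Γ ≤ Γ') : monotoneHull ω Γ ≤ ω Γ' :=
  sInf_le ⟨Γ', h, rfl⟩

theorem exists_of_monotoneHull_lt {P : Type*} [Preorder P] {ω : Translation P → ℝ≥0∞}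
    {Γ : Translation P} {c : ℝ≥0∞} (h : monotoneHull ω Γ < c) :
    ∃ Γ', Γ ≤ Γ' ∧ ω Γ' < c := by
  obtain ⟨_, ⟨Γ', hΓ, rfl⟩, hlt⟩ := sInf_lt_iff.1 h
  exact ⟨Γ', hΓ, hlt⟩

theorem Translation.comp_le_comp {P : Type*} [Preorder P] {Γ₁ Γ₁' Γ₂ Γ₂' : Translation P}
    (h₁ : Γ₁ ≤ Γ₁') (h₂ : Γ₂ ≤ Γ₂') : Γ₁.comp Γ₂ ≤ Γ₁'.comp Γ₂' :=
  fun x => (h₁ _).trans (Γ₁'.mono (h₂ x))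

/-- Extends `φ : F ⟶ Γ ⋙ G` to a larger translation `Γ'` by composing with the structure
maps `G(Γ x ≤ Γ' x)`. -/
def extendHom {P : Type*} [Preorder P] {D : Type*} [Category D] {Γ Γ' : Translation P}
    (h : Γ ≤ Γ') {F G : P ⥤ D} (φ : F ⟶ Γ.functor ⋙ G) : F ⟶ Γ'.functor ⋙ G where
  app x := φ.app x ≫ G.map (homOfLE (h x))
  naturality x y f := by
    rw [← Category.assoc, φ.naturality, Category.assoc, Category.assoc]
    congr 1
    exact (G.map_comp _ _).symm.trans
      ((congrArg G.map (Subsingleton.elim _ _)).trans (G.map_comp _ _))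

/-- The triangle identity survives enlarging both translations: naturality of `ψ` along
`Γ x ≤ Γ' x` moves all the added structure maps to the right of the original triangle, and
structure maps over a preorder compose uniquely. -/
theorem extendHom_triangle {P : Type*} [Preorder P] {D : Type*} [Category D]
    {Γ Γ' K K' : Translation P} (hΓ : Γ ≤ Γ') (hK : K ≤ K') {F G : P ⥤ D}
    (φ : F ⟶ Γ.functor ⋙ G) (ψ : G ⟶ K.functor ⋙ F) (x : P)
    (tri : φ.app x ≫ ψ.app (Γ.toFun x) =
      F.map (homOfLE ((Γ.le_apply x).trans (K.le_apply _)))) :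
    (extendHom hΓ φ).app x ≫ (extendHom hK ψ).app (Γ'.toFun x) =
      F.map (homOfLE ((Γ'.le_apply x).trans (K'.le_apply _))) := by
  -- The components are restated with codomains `G.obj (Γ x)` and `F.obj (K y)`, to which the
  -- objects of the composite functors reduce, so that rewriting sees matching types.
  let φx : F.obj x ⟶ G.obj (Γ.toFun x) := φ.app x
  let ψy (y : P) : G.obj y ⟶ F.obj (K.toFun y) := ψ.app y
  have nat : G.map (homOfLE (hΓ x)) ≫ ψy (Γ'.toFun x) =
      ψy (Γ.toFun x) ≫ F.map (homOfLE (K.mono (hΓ x))) := ψ.naturality (homOfLE (hΓ x))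
  have tri' : φx ≫ ψy (Γ.toFun x) =
      F.map (homOfLE ((Γ.le_apply x).trans (K.le_apply _))) := tri
  change (φx ≫ G.map (homOfLE (hΓ x))) ≫ ψy (Γ'.toFun x) ≫
    F.map (homOfLE (hK (Γ'.toFun x))) = _
  rw [Category.assoc, reassoc_of% nat, reassoc_of% tri', ← F.map_comp, ← F.map_comp]
  rfl

theorem Interleaved.of_le {P : Type*} [Preorder P] {D : Type*} [Category D]
    {Γ Γ' K K' : Translation P} {F G : P ⥤ D} (hΓ : Γ ≤ Γ') (hK : K ≤ K')
    (h : Interleaved Γ K F G) : Interleaved Γ' K' F G := by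
  obtain ⟨I⟩ := h
  exact ⟨⟨extendHom hΓ I.φ, extendHom hK I.ψ,
    fun x => extendHom_triangle hΓ hK I.φ I.ψ x (I.tri₁ x),
    fun x => extendHom_triangle hK hΓ I.ψ I.φ x (I.tri₂ x)⟩⟩

/-- The monotone hull of a sublinear projection is a monotone sublinear
projection inducing the same interleaving distance. -/
theorem monotoneHull_sublinear_and_dist_eq {P : Type*} [Preorder P]
    (ω : Translation P → ℝ≥0∞)
    (hω0 : ω (Translation.id P) = 0)
    (hωsub : ∀ Γ₁ Γ₂ : Translation P, ω (Γ₁.comp Γ₂) ≤ ω Γ₁ + ω Γ₂) :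
    monotoneHull ω (Translation.id P) = 0 ∧
    (∀ Γ₁ Γ₂ : Translation P,
      monotoneHull ω (Γ₁.comp Γ₂) ≤ monotoneHull ω Γ₁ + monotoneHull ω Γ₂) ∧
    (∀ Γ K : Translation P, Γ ≤ K → monotoneHull ω Γ ≤ monotoneHull ω K) ∧
    (∀ (D : Type u₁) [Category.{v₁} D] (F G : P ⥤ D),
      dSub ω F G = dSub (monotoneHull ω) F G) := by
  have hle (Γ : Translation P) : monotoneHull ω Γ ≤ ω Γ := monotoneHull_le ω (le_refl Γ)
  refine ⟨le_antisymm ((hle _).trans hω0.le) bot_le, fun Γ₁ Γ₂ => ?_, fun Γ K h => ?_,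
    fun D _ F G => le_antisymm ?_ ?_⟩
  · have hiInf (Γ : Translation P) : monotoneHull ω Γ = ⨅ Γ' ∈ {Γ' | Γ ≤ Γ'}, ω Γ' := sInf_image
    rw [hiInf Γ₁, hiInf Γ₂]
    exact ENNReal.le_iInf₂_add_iInf₂ fun Γ₁' h₁ Γ₂' h₂ =>
      (monotoneHull_le ω (Translation.comp_le_comp h₁ h₂)).trans (hωsub Γ₁' Γ₂')
  · exact sInf_le_sInf (Set.image_mono fun Γ' hΓ' => le_trans h hΓ')
  · refine le_sInf ?_
    rintro _ ⟨ε, ⟨Γ, K, hΓ, hK, hI⟩, rfl⟩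
    refine ENNReal.le_of_forall_pos_le_add fun δ hδ _ => ?_
    have hlt : (ε : ℝ≥0∞) < ((ε + δ : ℝ≥0) : ℝ≥0∞) :=
      ENNReal.coe_lt_coe.2 (lt_add_of_pos_right ε hδ)
    obtain ⟨Γ', hΓΓ', hΓ'⟩ := exists_of_monotoneHull_lt (hΓ.trans_lt hlt)
    obtain ⟨K', hKK', hK'⟩ := exists_of_monotoneHull_lt (hK.trans_lt hlt)
    have hmem := ENNReal.coe_add ε δ
    exact hmem ▸ sInf_le ⟨ε + δ, ⟨Γ', K', hΓ'.le, hK'.le, hI.of_le hΓΓ' hKK'⟩, rfl⟩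
  · refine sInf_le_sInf (Set.image_mono ?_)
    rintro ε ⟨Γ, K, hΓ, hK, hI⟩
    exact ⟨Γ, K, (hle Γ).trans hΓ, (hle K).trans hK, hI⟩
end

section
/- Soft stability for sublinear projections: let P be a preordered set equipped with a sublinear projection ω, let F, G : P ⥤ D be functors into a category D, and let H : D ⥤ E be a functor into a category E. Then d^ω(F ⋙ H, G ⋙ H) ≤ d^ω(F, G); that is, post-composition with H is 1-Lipschitz for the interleaving distance. -/
/-!
A functor preserves composition, so it carries the two triangle identities of a `(Γ,K)`-interleaving
of `F` and `G` to those of a `(Γ,K)`-interleaving of `F ⋙ H` and `G ⋙ H`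
(`Interleaving.whiskerRight`). The translations are unchanged, so every `ε` admissible for `(F, G)`
is admissible for `(F ⋙ H, G ⋙ H)`, and the infimum over the larger set is smaller.
-/

open CategoryTheory
open scoped NNReal ENNReal

universe v₁ u₁ v₂ u₂

variable {P : Type*} [Preorder P] {D : Type u₁} [Category.{v₁} D]

/-- The image of a `(Γ,K)`-interleaving under post-composition with a functor `H`. -/
def Interleaving.whiskerRight {E : Type u₂} [Category.{v₂} E] {Γ K : Translation P} {F G : P ⥤ D}
    (I : Interleaving Γ K F G) (H : D ⥤ E) : Interleaving Γ K (F ⋙ H) (G ⋙ H) where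
  φ := Functor.whiskerRight I.φ H
  ψ := Functor.whiskerRight I.ψ H
  tri₁ x := (H.map_comp _ _).symm.trans (congrArg H.map (I.tri₁ x))
  tri₂ x := (H.map_comp _ _).symm.trans (congrArg H.map (I.tri₂ x))

/-- soft stability. Post-composition with a functor `H : D ⥤ E` is
1-Lipschitz for the interleaving distance of a sublinear projection. -/
theorem dSub_comp_le {P : Type*} [Preorder P] {D : Type u₁} [Category.{v₁} D]
    {E : Type u₂} [Category.{v₂} E]
    (ω : Translation P → ℝ≥0∞)
    (hω0 : ω (Translation.id P) = 0)
    (hωsub : ∀ Γ₁ Γ₂ : Translation P, ω (Γ₁.comp Γ₂) ≤ ω Γ₁ + ω Γ₂)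
    (F G : P ⥤ D) (H : D ⥤ E) :
    dSub ω (F ⋙ H) (G ⋙ H) ≤ dSub ω F G := by
  refine sInf_le_sInf (Set.image_mono ?_)
  rintro ε ⟨Γ, K, hΓ, hK, ⟨I⟩⟩
  exact ⟨Γ, K, hΓ, hK, ⟨I.whiskerRight H⟩⟩
end

section
/- Let ω be a sublinear projection on a preordered set P. Suppose that for every ε ≥ 0 there exists a translation Ω_ε of P with ω(Ω_ε) ≤ ε which is largest in the sense that every translation Γ with ω(Γ) ≤ ε satisfies Γ ≤ Ω_ε. Then (Ω_ε)_{ε ∈ [0,∞)} is a superlinear family on P, and for any category D and any functors F, G : P ⥤ D the two interleaving distances agree: d^ω(F,G) = d^Ω(F,G). -/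
/-!
Superlinearity holds because `Ω ε₁ ∘ Ω ε₂` has `ω`-value at most `ε₁ + ε₂`, so it lies below the
largest translation `Ω (ε₁ + ε₂)`. For the distances, an interleaving along `(Γ, K)` extends along
any larger pair of translations (`Interleaved.mono`) by post-composing with the structure maps of
`F` and `G`. Hence `F` and `G` are `ε`-interleaved with respect to `ω` if and only if they are
`(Ω ε, Ω ε)`-interleaved, and both distances are infima of the same set.
-/

open CategoryTheory
open scoped NNReal ENNReal

universe v₁ u₁ v₂ u₂

variable {P : Type*} [Preorder P] {D : Type u₁} [Category.{v₁} D]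

/-- The interleaving distance associated to a superlinear family `Ω`. -/
noncomputable def dSuper (Ω : ℝ≥0 → Translation P) (F G : P ⥤ D) : ℝ≥0∞ :=
  sInf ((fun ε : ℝ≥0 => (ε : ℝ≥0∞)) ''
    {ε : ℝ≥0 | Interleaved (Ω ε) (Ω ε) F G})


/-- The natural transformation `F ⟶ Γ' ⋙ G` obtained from `F ⟶ Γ ⋙ G` by composing with the
structure maps `G (Γ x ≤ Γ' x)`. -/
def extendNatTrans {Γ Γ' : Translation P} (h : Γ ≤ Γ') {F G : P ⥤ D}
    (φ : F ⟶ Γ.functor ⋙ G) : F ⟶ Γ'.functor ⋙ G where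
  app x := φ.app x ≫ G.map (homOfLE (h x))
  naturality x y f := by
    have e := φ.naturality f
    simp only [Functor.comp_map] at e ⊢
    rw [← Category.assoc, e, Category.assoc, Category.assoc]
    erw [← G.map_comp, ← G.map_comp]
    rfl

/-- The triangle identity for a pair of extended transformations: one structure map slides past
`ψ` by naturality, and all structure maps then compose by thinness of `P`. -/
lemma extendNatTrans_triangle {Γ Γ' K K' : Translation P} (hΓ : Γ ≤ Γ') (hK : K ≤ K')
    {F G : P ⥤ D} (φ : F ⟶ Γ.functor ⋙ G) (ψ : G ⟶ K.functor ⋙ F)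
    (tri : ∀ x : P, φ.app x ≫ ψ.app (Γ.toFun x) =
      F.map (homOfLE ((Γ.le_apply x).trans (K.le_apply _)))) (x : P) :
    (extendNatTrans hΓ φ).app x ≫ (extendNatTrans hK ψ).app (Γ'.toFun x) =
      F.map (homOfLE ((Γ'.le_apply x).trans (K'.le_apply _))) := by
  have e : G.map (homOfLE (hΓ x)) ≫ ψ.app (Γ'.toFun x) =
      ψ.app (Γ.toFun x) ≫ F.map (homOfLE (K.mono (hΓ x))) :=
    ψ.naturality (homOfLE (hΓ x))
  calc (φ.app x ≫ G.map (homOfLE (hΓ x))) ≫ ψ.app (Γ'.toFun x) ≫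
        F.map (homOfLE (hK (Γ'.toFun x)))
      = φ.app x ≫ (G.map (homOfLE (hΓ x)) ≫ ψ.app (Γ'.toFun x)) ≫
        F.map (homOfLE (hK (Γ'.toFun x))) := by
        exact (Category.assoc _ _ _).trans
          (congrArg (φ.app x ≫ ·) (Category.assoc _ _ _).symm)
    _ = (φ.app x ≫ ψ.app (Γ.toFun x)) ≫ F.map (homOfLE (K.mono (hΓ x))) ≫
        F.map (homOfLE (hK (Γ'.toFun x))) := by
        refine (congrArg (fun m => φ.app x ≫ m ≫ F.map (homOfLE (hK (Γ'.toFun x)))) e).trans ?_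
        exact (congrArg (φ.app x ≫ ·) (Category.assoc _ _ _)).trans
          (Category.assoc _ _ _).symm
    _ = _ := by
        rw [tri]
        erw [← F.map_comp, ← F.map_comp]
        rfl

/-- Interleavings persist when both translations are enlarged. -/
lemma Interleaved.mono {Γ Γ' K K' : Translation P} (hΓ : Γ ≤ Γ') (hK : K ≤ K')
    {F G : P ⥤ D} (h : Interleaved Γ K F G) : Interleaved Γ' K' F G := by
  obtain ⟨i⟩ := h
  exact ⟨⟨extendNatTrans hΓ i.φ, extendNatTrans hK i.ψ,
    extendNatTrans_triangle hΓ hK i.φ i.ψ i.tri₁,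
    extendNatTrans_triangle hK hΓ i.ψ i.φ i.tri₂⟩⟩

/-- If a sublinear projection `ω` admits largest `ε`-translations `Ω_ε`,
then these form a superlinear family and the two interleaving distances agree. -/
theorem largest_translations_give_superlinear_family_and_dist_eq {P : Type*} [Preorder P]
    (ω : Translation P → ℝ≥0∞)
    (hω0 : ω (Translation.id P) = 0)
    (hωsub : ∀ Γ₁ Γ₂ : Translation P, ω (Γ₁.comp Γ₂) ≤ ω Γ₁ + ω Γ₂)
    (Ω : ℝ≥0 → Translation P)
    (hΩle : ∀ ε : ℝ≥0, ω (Ω ε) ≤ ε)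
    (hΩmax : ∀ (ε : ℝ≥0) (Γ : Translation P), ω Γ ≤ ε → Γ ≤ Ω ε) :
    (∀ (ε₁ ε₂ : ℝ≥0) (x : P),
      (Ω ε₁).toFun ((Ω ε₂).toFun x) ≤ (Ω (ε₁ + ε₂)).toFun x) ∧
    ∀ (D : Type u₁) [Category.{v₁} D] (F G : P ⥤ D), dSub ω F G = dSuper Ω F G := by
  refine ⟨fun ε₁ ε₂ => hΩmax (ε₁ + ε₂) ((Ω ε₁).comp (Ω ε₂)) ?_, fun D _ F G => ?_⟩
  · rw [ENNReal.coe_add]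
    exact (hωsub _ _).trans (add_le_add (hΩle ε₁) (hΩle ε₂))
  · unfold dSub dSuper
    congr 2
    ext ε
    constructor
    · rintro ⟨Γ, K, hΓ, hK, h⟩
      exact h.mono (hΩmax ε Γ hΓ) (hΩmax ε K hK)
    · exact fun h => ⟨Ω ε, Ω ε, hΩle ε, hΩle ε, h⟩
end

section
/- Properties of the vector-valued interleaving relation: let P be a preordered set and let Ω : [0,∞)ⁿ → Trans_P assign to each componentwise-nonnegative vector e ∈ [0,∞)ⁿ a translation Ω_e of P such that Ω_{e₁}(Ω_{e₂}(x)) ≤ Ω_{e₁+e₂}(x) for all x ∈ P and all e₁, e₂ ∈ [0,∞)ⁿ. For functors F, G : P ⥤ D define 𝔇(F,G) = { e ∈ [0,∞)ⁿ : F and G are (Ω_e,Ω_e)-interleaved }. Then for any functors E, F, G : P ⥤ D and any functor H : D ⥤ E': (i) 𝔇(F,G) ⊆ 𝔇(F ⋙ H, G ⋙ H); and (ii) the Minkowski sum satisfies 𝔇(E,F) + 𝔇(F,G) ⊆ 𝔇(E,G), i.e. if e₁ ∈ 𝔇(E,F) and e₂ ∈ 𝔇(F,G) then e₁ + e₂ ∈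 𝔇(E,G). -/
/-!
Whiskering an interleaving with `H` gives an interleaving, since functors preserve the two triangle
identities; this is functoriality. For the Minkowski-sum inclusion, a `(Γ₁,K₁)`-interleaving of `E`
and `F` and a `(Γ₂,K₂)`-interleaving of `F` and `G` compose to a `(Γ₂Γ₁, K₁K₂)`-interleaving of `E`
and `G` (`Interleaving.trans`), and translations may always be enlarged by composing with structure
maps (`Interleaving.ofLE`). The superadditivity of `Ω`, together with commutativity of addition of
vectors, says that both `Ω e₂ ∘ Ω e₁` and `Ω e₁ ∘ Ω e₂` lie below `Ω (e₁ + e₂)`.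
-/


open CategoryTheory
open scoped NNReal ENNReal

universe v₁ u₁ v₂ u₂

variable {P : Type*} [Preorder P] {D : Type u₁} [Category.{v₁} D]

namespace Interleaving

variable {Γ K : Translation P} {F G : P ⥤ D}

/-- The components of `φ`, typed with target `G.obj (Γ.toFun x)` rather than the definitionally
equal `(Γ.functor ⋙ G).obj x`, so that rewriting is not blocked. -/
def hom (I : Interleaving Γ K F G) (x : P) : F.obj x ⟶ G.obj (Γ.toFun x) := I.φ.app x

/-- The components of `ψ`, typed in the same way as those of `φ` in `Interleaving.hom`. -/
def inv (I : Interleaving Γ K F G) (x : P) : G.obj x ⟶ F.obj (K.toFun x) := I.ψ.app x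

lemma hom_naturality (I : Interleaving Γ K F G) {x y : P} (f : x ⟶ y) :
    F.map f ≫ I.hom y = I.hom x ≫ G.map (homOfLE (Γ.mono f.le)) :=
  I.φ.naturality f

lemma hom_naturality_assoc (I : Interleaving Γ K F G) {x y : P} (f : x ⟶ y) {Z : D}
    (k : G.obj (Γ.toFun y) ⟶ Z) :
    F.map f ≫ I.hom y ≫ k = I.hom x ≫ G.map (homOfLE (Γ.mono f.le)) ≫ k := by
  rw [← Category.assoc, hom_naturality, Category.assoc]

lemma inv_naturality (I : Interleaving Γ K F G) {x y : P} (f : x ⟶ y) :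
    G.map f ≫ I.inv y = I.inv x ≫ F.map (homOfLE (K.mono f.le)) :=
  I.ψ.naturality f

lemma inv_naturality_assoc (I : Interleaving Γ K F G) {x y : P} (f : x ⟶ y) {Z : D}
    (k : F.obj (K.toFun y) ⟶ Z) :
    G.map f ≫ I.inv y ≫ k = I.inv x ≫ F.map (homOfLE (K.mono f.le)) ≫ k := by
  rw [← Category.assoc, inv_naturality, Category.assoc]

lemma hom_inv (I : Interleaving Γ K F G) (x : P) :
    I.hom x ≫ I.inv (Γ.toFun x) =
      F.map (homOfLE ((Γ.le_apply x).trans (K.le_apply _))) :=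
  I.tri₁ x

lemma hom_inv_assoc (I : Interleaving Γ K F G) (x : P) {Z : D}
    (k : F.obj (K.toFun (Γ.toFun x)) ⟶ Z) :
    I.hom x ≫ I.inv (Γ.toFun x) ≫ k =
      F.map (homOfLE ((Γ.le_apply x).trans (K.le_apply _))) ≫ k := by
  rw [← Category.assoc, hom_inv]

lemma inv_hom (I : Interleaving Γ K F G) (x : P) :
    I.inv x ≫ I.hom (K.toFun x) =
      G.map (homOfLE ((K.le_apply x).trans (Γ.le_apply _))) :=
  I.tri₂ x

lemma inv_hom_assoc (I : Interleaving Γ K F G) (x : P) {Z : D}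
    (k : G.obj (Γ.toFun (K.toFun x)) ⟶ Z) :
    I.inv x ≫ I.hom (K.toFun x) ≫ k =
      G.map (homOfLE ((K.le_apply x).trans (Γ.le_apply _))) ≫ k := by
  rw [← Category.assoc, inv_hom]

/-- An interleaving built from components whose types mention `Translation.toFun` only. -/
def ofComponents (f : ∀ x, F.obj x ⟶ G.obj (Γ.toFun x)) (g : ∀ x, G.obj x ⟶ F.obj (K.toFun x))
    (hf : ∀ {x y : P} (h : x ⟶ y), F.map h ≫ f y = f x ≫ G.map (homOfLE (Γ.mono h.le)))
    (hg : ∀ {x y : P} (h : x ⟶ y), G.map h ≫ g y = g x ≫ F.map (homOfLE (K.mono h.le)))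
    (hfg : ∀ x, f x ≫ g (Γ.toFun x) = F.map (homOfLE ((Γ.le_apply x).trans (K.le_apply _))))
    (hgf : ∀ x, g x ≫ f (K.toFun x) = G.map (homOfLE ((K.le_apply x).trans (Γ.le_apply _)))) :
    Interleaving Γ K F G where
  φ := { app := f, naturality := fun _ _ h => hf h }
  ψ := { app := g, naturality := fun _ _ h => hg h }
  tri₁ := hfg
  tri₂ := hgf

/-- Interleavings are preserved by postcomposition with a functor. -/
def whiskerRight_s19 {E' : Type u₂} [Category.{v₂} E'] (I : Interleaving Γ K F G) (H : D ⥤ E') :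
    Interleaving Γ K (F ⋙ H) (G ⋙ H) :=
  ofComponents (fun x => H.map (I.hom x)) (fun x => H.map (I.inv x))
    (fun h => by simp only [Functor.comp_map, ← H.map_comp, hom_naturality])
    (fun h => by simp only [Functor.comp_map, ← H.map_comp, inv_naturality])
    (fun x => by simp only [Functor.comp_map, ← H.map_comp, hom_inv])
    (fun x => by simp only [Functor.comp_map, ← H.map_comp, inv_hom])

/-- Enlarging both translations: the components are followed by structure maps. -/
def ofLE (I : Interleaving Γ K F G) {Γ' K' : Translation P} (hΓ : Γ ≤ Γ') (hK : K ≤ K') :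
    Interleaving Γ' K' F G :=
  ofComponents (fun x => I.hom x ≫ G.map (homOfLE (hΓ x)))
    (fun x => I.inv x ≫ F.map (homOfLE (hK x)))
    (fun h => by
      simp only [hom_naturality_assoc, Category.assoc, ← G.map_comp, homOfLE_comp])
    (fun h => by
      simp only [inv_naturality_assoc, Category.assoc, ← F.map_comp, homOfLE_comp])
    (fun x => by
      simp only [Category.assoc, inv_naturality_assoc, hom_inv_assoc, ← F.map_comp, homOfLE_comp])
    (fun x => by
      simp only [Category.assoc, hom_naturality_assoc, inv_hom_assoc, ← G.map_comp, homOfLE_comp])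

/-- Composition of interleavings; the backward translations compose in the opposite order. In each
triangle identity, the inner pair of maps collapses to a structure map, which is then moved past
the outer map by naturality. -/
def trans {E F G : P ⥤ D} {Γ₁ K₁ Γ₂ K₂ : Translation P}
    (I : Interleaving Γ₁ K₁ E F) (J : Interleaving Γ₂ K₂ F G) :
    Interleaving (Γ₂.comp Γ₁) (K₁.comp K₂) E G :=
  ofComponents (Γ := Γ₂.comp Γ₁) (K := K₁.comp K₂)
    (fun x => I.hom x ≫ J.hom (Γ₁.toFun x))
    (fun x => J.inv x ≫ I.inv (K₂.toFun x))
    -- `change` spells out `Translation.comp`, which the rewriting would not unfold.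
    (fun {x y} h => by
      change E.map h ≫ I.hom y ≫ J.hom (Γ₁.toFun y) =
        (I.hom x ≫ J.hom (Γ₁.toFun x)) ≫ G.map (homOfLE (Γ₂.mono (Γ₁.mono h.le)))
      simp only [hom_naturality_assoc, hom_naturality, Category.assoc])
    (fun {x y} h => by
      change G.map h ≫ J.inv y ≫ I.inv (K₂.toFun y) =
        (J.inv x ≫ I.inv (K₂.toFun x)) ≫ E.map (homOfLE (K₁.mono (K₂.mono h.le)))
      simp only [inv_naturality_assoc, inv_naturality, Category.assoc])
    (fun x => by
      change (I.hom x ≫ J.hom (Γ₁.toFun x)) ≫ J.inv (Γ₂.toFun (Γ₁.toFun x)) ≫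
        I.inv (K₂.toFun (Γ₂.toFun (Γ₁.toFun x))) = _
      simp only [Category.assoc, hom_inv_assoc, inv_naturality, ← E.map_comp, homOfLE_comp]
      rfl)
    (fun x => by
      change (J.inv x ≫ I.inv (K₂.toFun x)) ≫ I.hom (K₁.toFun (K₂.toFun x)) ≫
        J.hom (Γ₁.toFun (K₁.toFun (K₂.toFun x))) = _
      simp only [Category.assoc, inv_hom_assoc, hom_naturality, ← G.map_comp, homOfLE_comp]
      rfl)

end Interleaving

/-- Properties of the vector-valued interleaving relation `𝔇`:
functoriality and the Minkowski-sum triangle inequality. -/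
theorem vector_interleaving_props {P : Type*} [Preorder P] {D : Type u₁} [Category.{v₁} D]
    {E' : Type u₂} [Category.{v₂} E'] {n : ℕ}
    (Ω : (Fin n → ℝ≥0) → Translation P)
    (hΩ : ∀ (e₁ e₂ : Fin n → ℝ≥0) (x : P),
      (Ω e₁).toFun ((Ω e₂).toFun x) ≤ (Ω (e₁ + e₂)).toFun x)
    (E F G : P ⥤ D) (H : D ⥤ E') :
    ({e : Fin n → ℝ≥0 | Interleaved (Ω e) (Ω e) F G} ⊆
      {e : Fin n → ℝ≥0 | Interleaved (Ω e) (Ω e) (F ⋙ H) (G ⋙ H)}) ∧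
    (∀ e₁ e₂ : Fin n → ℝ≥0,
      e₁ ∈ {e : Fin n → ℝ≥0 | Interleaved (Ω e) (Ω e) E F} →
      e₂ ∈ {e : Fin n → ℝ≥0 | Interleaved (Ω e) (Ω e) F G} →
      e₁ + e₂ ∈ {e : Fin n → ℝ≥0 | Interleaved (Ω e) (Ω e) E G}) := by
  refine ⟨fun e ⟨I⟩ => ⟨I.whiskerRight_s19 H⟩, fun e₁ e₂ ⟨I⟩ ⟨J⟩ => ⟨(I.trans J).ofLE ?_ ?_⟩⟩
  · intro x
    rw [add_comm]
    exact hΩ e₂ e₁ x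
  · exact hΩ e₁ e₂
end
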